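/- Let G be a finite directed graph in which every vertex has out-degree at least 2, fix a vertex x, and suppose the out-neighbourhood B_x^+(2h) of radius 2h contains at most one cycle (tree excess ≤ 1). Then for every t ≤ h, the probability that the simple random walk started at x has X_t outside the set V = {y : B_y^+(h) is a directed tree} is at most 2^{-t}. -/

import Mathlib

namespace WalkAux

/-- there is a walk of length exactly `m` from `a` to `b` -/
def W {V : Type*} (N : V → Finset V) : ℕ → V → V → Prop
  | 0, a, b => a = b
  | m + 1, a, b => ∃ c ∈ N a, W N m c b

lemma W_tail {V : Type*} (N : V → Finset V) (m : ℕ) : ∀ a b : V,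
    W N (m + 1) a b ↔ ∃ c, W N m a c ∧ b ∈ N c := by
  induction m with
  | zero => intro a b; simp [W]
  | succ m ih =>
    intro a b
    constructor
    · rintro ⟨c, hc, h⟩
      obtain ⟨d, hd, hb⟩ := (ih c b).1 h
      exact ⟨d, ⟨c, hc, hd⟩, hb⟩
    · rintro ⟨d, ⟨c, hc, hd⟩, hb⟩
      exact ⟨c, hc, (ih c b).2 ⟨d, hd, hb⟩⟩

lemma W_trans {V : Type*} (N : V → Finset V) (m : ℕ) : ∀ (n : ℕ) (a b c : V),
    W N m a b → W N n b c → W N (m + n) a c := by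
  intro n
  induction n with
  | zero => intro a b c h1 h2; cases h2; exact h1
  | succ n ih =>
    intro a b c h1 h2
    obtain ⟨d, hd, hc⟩ := (W_tail N n b c).1 h2
    exact (W_tail N (m + n) a c).2 ⟨d, ih a b d h1 hd, hc⟩

lemma W_iff {V : Type*} (N : V → Finset V) (m : ℕ) : ∀ a b : V,
    (∃ p : ℕ → V, p 0 = a ∧ p m = b ∧ ∀ i < m, p (i + 1) ∈ N (p i)) ↔ W N m a b := by
  induction m with
  | zero =>
    intro a b
    constructor
    · rintro ⟨p, h0, h1, -⟩; exact h0.symm.trans h1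
    · intro h; exact ⟨fun _ => a, rfl, h, by simp⟩
  | succ m ih =>
    intro a b
    constructor
    · rintro ⟨p, h0, h1, h2⟩
      refine ⟨p 1, by simpa [h0] using h2 0 (by omega), (ih _ _).1 ⟨fun i => p (i + 1), rfl, h1, ?_⟩⟩
      intro i hi
      exact h2 (i + 1) (by omega)
    · rintro ⟨c, hc, h⟩
      obtain ⟨p, h0, h1, h2⟩ := (ih c b).2 h
      refine ⟨fun i => Nat.casesOn i a p, rfl, h1, ?_⟩
      intro i hi
      cases i with
      | zero => simpa [h0] using hc
      | succ i => exact h2 i (by omega)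

/-- the vertices of the ball -/
def Bv {V : Type*} (N : V → Finset V) (a : V) (k : ℕ) : Set V := {u | ∃ m ≤ k, W N m a u}
/-- the edges of the ball -/
def Be {V : Type*} (N : V → Finset V) (a : V) (k : ℕ) : Set (V × V) :=
  {e | (∃ m ≤ k - 1, W N m a e.1) ∧ e.2 ∈ N e.1}

lemma dep_reach {V : Type*} {T : V → V → Prop} {dep : V → ℕ}
    (hd : ∀ u v, T u v → dep v = dep u + 1) {u v : V} (h : Relation.ReflTransGen T u v) :
    u = v ∨ dep u < dep v := by
  induction h with
  | refl => left; rfl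
  | tail _ h2 ih =>
    have := hd _ _ h2
    right
    rcases ih with rfl | ih <;> omega

/-- a ball all of whose edges belong to `T` is a tree -/
lemma tree_of_T {V : Type*} [Fintype V] (N : V → Finset V)
    {T : V → V → Prop} {dep : V → ℕ}
    (hT : ∀ u u' v, T u v → T u' v → u = u')
    (hd : ∀ u v, T u v → dep v = dep u + 1) (y : V) (k : ℕ) (hk : 1 ≤ k)
    (hE : ∀ e ∈ Be N y k, T e.1 e.2) : (Be N y k).ncard + 1 = (Bv N y k).ncard := by
  have hmono : ∀ m u, m ≤ k - 1 → W N m y u → dep y ≤ dep u := by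
    intro m
    induction m with
    | zero => intro u _ h; cases h; exact le_rfl
    | succ m ih =>
      intro u hm h
      obtain ⟨c, hc, hu⟩ := (W_tail N m y u).1 h
      have := ih c (by omega) hc
      have := hd c u (hE (c, u) ⟨⟨m, by omega, hc⟩, hu⟩)
      omega
  have himg : Prod.snd '' (Be N y k) = Bv N y k \ {y} := by
    ext v
    constructor
    · rintro ⟨⟨u, v⟩, he, rfl⟩
      obtain ⟨⟨m, hm, hw⟩, hv⟩ := he
      refine ⟨⟨m + 1, by omega, (W_tail N m y v).2 ⟨u, hw, hv⟩⟩, ?_⟩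
      intro hvy
      have h1 := hmono m u hm hw
      have h2 := hd u v (hE (u, v) ⟨⟨m, hm, hw⟩, hv⟩)
      simp only [Set.mem_singleton_iff] at hvy
      subst hvy
      omega
    · rintro ⟨⟨m, hm, hw⟩, hne⟩
      cases m with
      | zero => exact absurd hw.symm hne
      | succ m =>
        obtain ⟨c, hc, hv⟩ := (W_tail N m y v).1 hw
        exact ⟨(c, v), ⟨⟨m, by omega, hc⟩, hv⟩, rfl⟩
  have hinj : Set.InjOn Prod.snd (Be N y k) := by
    rintro ⟨u, v⟩ h1 ⟨u', v'⟩ h2 heq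
    simp only at heq
    subst heq
    rw [hT u u' v (hE _ h1) (hE _ h2)]
  rw [← Set.ncard_image_of_injOn hinj, himg]
  exact Set.ncard_diff_singleton_add_one ⟨0, by omega, rfl⟩ (Set.toFinite _)

/-- a ball of excess at most one has a spanning tree missing at most one edge -/
lemma exists_T {V : Type*} [Fintype V] (N : V → Finset V) (x : V) (K : ℕ) (hK : 1 ≤ K)
    (hex : (Be N x K).ncard ≤ (Bv N x K).ncard) :
    ∃ (T : V → V → Prop) (dep : V → ℕ) (e : V × V),
      (∀ u u' v, T u v → T u' v → u = u') ∧ (∀ u v, T u v → dep v = dep u + 1) ∧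
      ∀ f ∈ Be N x K, T f.1 f.2 ∨ f = e := by
  classical
  let dep : V → ℕ := fun v => sInf {m | W N m x v}
  have hdle : ∀ m v, W N m x v → dep v ≤ m := fun m v h => Nat.sInf_le h
  have hdW : ∀ m v, W N m x v → W N (dep v) x v := fun m v h =>
    Nat.sInf_mem (s := {m | W N m x v}) ⟨m, h⟩
  have hpar : ∀ v, v ∈ Bv N x K \ {x} → ∃ u, (u, v) ∈ Be N x K ∧ dep v = dep u + 1 := by
    rintro v ⟨⟨m, hm, hw⟩, hne⟩
    have h1 := hdle m v hw
    have h2 := hdW m v hw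
    rcases hdv : dep v with _ | d
    · rw [hdv] at h2; exact absurd h2.symm hne
    · rw [hdv] at h2
      obtain ⟨u, hu, hv⟩ := (W_tail N d x v).1 h2
      refine ⟨u, ⟨⟨d, by omega, hu⟩, hv⟩, ?_⟩
      have h3 := hdle d u hu
      have h4 := hdle _ v ((W_tail N (dep u) x v).2 ⟨u, hdW d u hu, hv⟩)
      omega
  choose! par hpar1 hpar2 using hpar
  let S : Set (V × V) := (fun v => (par v, v)) '' (Bv N x K \ {x})
  have hSsub : S ⊆ Be N x K := by
    rintro _ ⟨v, hv, rfl⟩; exact hpar1 v hv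
  have hScard : S.ncard + 1 = (Bv N x K).ncard := by
    rw [Set.ncard_image_of_injective _ (fun a b h => (Prod.mk.inj h).2)]
    exact Set.ncard_diff_singleton_add_one ⟨0, by omega, rfl⟩ (Set.toFinite _)
  have hdiff : (Be N x K \ S).ncard ≤ 1 := by
    have := Set.ncard_diff_add_ncard_of_subset hSsub (Set.toFinite _)
    omega
  have he : ∃ e, ∀ f ∈ Be N x K \ S, f = e := by
    rcases (Be N x K \ S).eq_empty_or_nonempty with h0 | ⟨e, he⟩
    · exact ⟨(x, x), by simp [h0]⟩
    · exact ⟨e, fun f hf => (Set.ncard_le_one (Set.toFinite _)).1 hdiff f hf e he⟩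
  obtain ⟨e, he⟩ := he
  refine ⟨fun u v => (u, v) ∈ S, dep, e, ?_, ?_, ?_⟩
  · rintro u u' v ⟨w, _, h1⟩ ⟨w', _, h2⟩
    obtain ⟨rfl, rfl⟩ := Prod.mk.inj h1
    obtain ⟨rfl, rfl⟩ := Prod.mk.inj h2
    rfl
  · rintro u v ⟨w, hw, h1⟩
    obtain ⟨rfl, rfl⟩ := Prod.mk.inj h1
    exact hpar2 w hw
  · intro f hf
    by_cases hfS : f ∈ S
    · exact Or.inl hfS
    · exact Or.inr (he f ⟨hf, hfS⟩)

/-- a walk to `e.1` inside the ball yields a `T`-walk -/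
lemma T_reach {V : Type*} (N : V → Finset V) (x : V) (K : ℕ)
    {T : V → V → Prop} {e : V × V} (hE : ∀ f ∈ Be N x K, T f.1 f.2 ∨ f = e) (m : ℕ) :
    ∀ (i : ℕ) (u : V), W N i x u → i + m ≤ K → W N m u e.1 → Relation.ReflTransGen T u e.1 := by
  induction m with
  | zero => intro i u _ _ h; cases h; exact .refl
  | succ m ih =>
    rintro i u hi him ⟨c, hc, h⟩
    rcases hE (u, c) ⟨⟨i, by omega, hi⟩, hc⟩ with h1 | h1
    · exact .head h1 (ih (i + 1) c ((W_tail N i x c).2 ⟨u, hi, hc⟩) (by omega) h)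
    · rw [← h1]

/-- at most one out-neighbour leads to the extra edge -/
lemma unique_next {V : Type*} {T : V → V → Prop} {dep : V → ℕ} {e : V × V}
    (hT : ∀ u u' v, T u v → T u' v → u = u')
    (hd : ∀ u v, T u v → dep v = dep u + 1) (u v w : V)
    (hv : T u v ∨ (u, v) = e) (hw : T u w ∨ (u, w) = e)
    (hva : Relation.ReflTransGen T v e.1) (hwa : Relation.ReflTransGen T w e.1) : v = w := by
  rcases hv with hv | hv <;> rcases hw with hw | hw
  · have h1 := hd _ _ hv
    have h2 := hd _ _ hw
    have htot := Relation.ReflTransGen.total_of_right_unique (r := Function.swap T)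
      (fun a b c h h' => hT b c a h h') (Relation.reflTransGen_swap.2 hva)
      (Relation.reflTransGen_swap.2 hwa)
    rcases htot with h | h
    · rcases dep_reach hd (Relation.reflTransGen_swap.1 h) with h | h
      · exact h.symm
      · omega
    · rcases dep_reach hd (Relation.reflTransGen_swap.1 h) with h | h
      · exact h
      · omega
  · have h1 := hd _ _ hv
    rw [← hw] at hva
    rcases dep_reach hd hva with h | h
    · rw [h] at h1; simp at h1
    · simp only at h; omega
  · have h1 := hd _ _ hw
    rw [← hv] at hwa
    rcases dep_reach hd hwa with h | h
    · rw [h] at h1; simp at h1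
    · simp only at h; omega
  · rw [← hw] at hv
    exact (Prod.mk.inj hv).2

lemma main_bound {V : Type*} [Fintype V] [DecidableEq V]
    (N : V → Finset V) (hdeg : ∀ v, 2 ≤ (N v).card) (x : V) (h : ℕ) (hh : 1 ≤ h)
    (P : Matrix V V ℝ) (hP : ∀ u v, P u v = if v ∈ N u then ((N u).card : ℝ)⁻¹ else 0)
    (hex : (Be N x (2 * h)).ncard ≤ (Bv N x (2 * h)).ncard) (t : ℕ) (ht : t ≤ h) :
    ∑ y, ({y : V | (Be N y h).ncard + 1 = (Bv N y h).ncard}ᶜ).indicator ((P ^ t) x) y ≤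
      (1 / 2 : ℝ) ^ t := by
  classical
  obtain ⟨T, dep, e, hT, hd, hE⟩ := exists_T N x (2 * h) (by omega) hex
  set B : Set V := {y : V | (Be N y h).ncard + 1 = (Bv N y h).ncard}ᶜ with hB
  have hbad : ∀ i u, W N i x u → i ≤ h → u ∈ B → ∃ m ≤ h - 1, W N m u e.1 := by
    intro i u hi hih hu
    by_contra hcon
    apply hu
    refine tree_of_T N hT hd u h hh ?_
    rintro f ⟨⟨m, hm, hw⟩, hf⟩
    rcases hE f ⟨⟨i + m, by omega, W_trans N i m x u f.1 hi hw⟩, hf⟩ with h1 | h1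
    · exact h1
    · exact absurd ⟨m, hm, h1 ▸ hw⟩ hcon
  have hstep : ∀ s u, ∑ y, B.indicator ((P ^ (s + 1)) u) y =
      ∑ v ∈ N u, ((N u).card : ℝ)⁻¹ * ∑ y, B.indicator ((P ^ s) v) y := by
    intro s u
    have h1 : ∀ y, B.indicator ((P ^ (s + 1)) u) y =
        ∑ v ∈ N u, ((N u).card : ℝ)⁻¹ * B.indicator ((P ^ s) v) y := by
      intro y
      by_cases hy : y ∈ B
      · simp only [Set.indicator_of_mem hy, pow_succ', Matrix.mul_apply, hP, ite_mul, zero_mul,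
          Finset.sum_ite_mem, Finset.univ_inter]
      · simp [Set.indicator_of_notMem hy]
    simp only [h1, Finset.mul_sum]
    exact Finset.sum_comm
  have key : ∀ s i u, W N i x u → i + s ≤ h →
      ∑ y, B.indicator ((P ^ s) u) y ≤ (1 / 2 : ℝ) ^ s ∧
      (∑ y, B.indicator ((P ^ s) u) y ≠ 0 → ∃ m ≤ s + (h - 1), W N m u e.1) := by
    intro s
    induction s with
    | zero =>
      intro i u hi his
      have h0 : ∑ y, B.indicator ((P ^ 0) u) y = if u ∈ B then 1 else 0 := by
        rw [Finset.sum_eq_single_of_mem u (Finset.mem_univ _)]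
        · simp [Set.indicator_apply]
        · intro w _ hw
          simp [Set.indicator_apply, Matrix.one_apply, hw.symm]
      rw [h0]
      refine ⟨by split_ifs <;> norm_num, ?_⟩
      intro hne
      have hu : u ∈ B := by by_contra hu; simp [hu] at hne
      simpa using hbad i u hi (by omega) hu
    | succ s ih =>
      intro i u hi his
      have hnb : ∀ v ∈ N u, W N (i + 1) x v := fun v hv => (W_tail N i x v).2 ⟨u, hi, hv⟩
      rw [hstep]
      constructor
      · have hc : (2 : ℝ) ≤ (N u).card := by exact_mod_cast hdeg u
        have hinv : ((N u).card : ℝ)⁻¹ ≤ 1 / 2 := by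
          rw [one_div]; exact inv_anti₀ (by norm_num) hc
        have hinv0 : 0 ≤ ((N u).card : ℝ)⁻¹ := by positivity
        by_cases hex : ∃ v ∈ N u, ∑ y, B.indicator ((P ^ s) v) y ≠ 0
        · obtain ⟨v, hv, hne⟩ := hex
          rw [Finset.sum_eq_single_of_mem v hv]
          · calc _ ≤ ((N u).card : ℝ)⁻¹ * (1 / 2 : ℝ) ^ s :=
                  mul_le_mul_of_nonneg_left (ih (i + 1) v (hnb v hv) (by omega)).1 hinv0
              _ ≤ (1 / 2) * (1 / 2 : ℝ) ^ s := mul_le_mul_of_nonneg_right hinv (by positivity)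
              _ = _ := (pow_succ' _ _).symm
          · intro w hw hwv
            by_contra hne'
            have hne2 : ∑ y, B.indicator ((P ^ s) w) y ≠ 0 := right_ne_zero_of_mul hne'
            obtain ⟨m, hm, hmv⟩ := (ih (i + 1) v (hnb v hv) (by omega)).2 hne
            obtain ⟨n, hn, hnw⟩ := (ih (i + 1) w (hnb w hw) (by omega)).2 hne2
            exact hwv (unique_next hT hd u w v (hE (u, w) ⟨⟨i, by omega, hi⟩, hw⟩)
              (hE (u, v) ⟨⟨i, by omega, hi⟩, hv⟩)
              (T_reach N x _ hE n (i + 1) w (hnb w hw) (by omega) hnw)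
              (T_reach N x _ hE m (i + 1) v (hnb v hv) (by omega) hmv))
        · push Not at hex
          rw [Finset.sum_eq_zero (fun v hv => by rw [hex v hv, mul_zero])]
          positivity
      · intro hne
        obtain ⟨v, hv, hvne⟩ := Finset.exists_ne_zero_of_sum_ne_zero hne
        obtain ⟨m, hm, hmv⟩ := (ih (i + 1) v (hnb v hv) (by omega)).2 (right_ne_zero_of_mul hvne)
        exact ⟨m + 1, by omega, v, hv, hmv⟩
  exact (key t 0 x rfl (by omega)).1

end WalkAux

/-- On a finite digraph with all out-degrees at least `2`, if the out-neighbourhood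
`B_x⁺(2h)` of radius `2h` around `x` has tree excess at most `1`, then for every `t ≤ h`
the simple random walk started at `x` satisfies
`P_x(X_t ∉ {y : B_y⁺(h) is a directed tree}) ≤ 2^{-t}`. -/
theorem walk_leaves_tree_roots_prob_le
    {V : Type*} [Fintype V] [DecidableEq V]
    (N : V → Finset V) (hdeg : ∀ v, 2 ≤ (N v).card)
    (x : V) (h t : ℕ) (ht : t ≤ h) :
    -- reachability within `k` steps
    let Reach : V → ℕ → V → Prop := fun a k b =>
      ∃ m ≤ k, ∃ p : ℕ → V, p 0 = a ∧ p m = b ∧ ∀ i < m, p (i + 1) ∈ N (p i)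
    -- transition matrix of the simple random walk
    let P : Matrix V V ℝ := fun u v => if v ∈ N u then ((N u).card : ℝ)⁻¹ else 0
    -- vertices and edges of the out-neighbourhood of radius `k`
    let Bv : V → ℕ → Set V := fun a k => {u | Reach a k u}
    let Be : V → ℕ → Set (V × V) := fun a k => {e | Reach a (k - 1) e.1 ∧ e.2 ∈ N e.1}
    -- tree excess `1 + |E| - |V|` of `B_x⁺(2h)` is at most `1`
    (Be x (2 * h)).ncard ≤ (Bv x (2 * h)).ncard →
    -- the probability that `X_t` is not an `h`-root is at most `2^{-t}`
    ∑ y, ({y : V | (Be y h).ncard + 1 = (Bv y h).ncard}ᶜ).indicator ((P ^ t) x) y ≤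
      (1 / 2 : ℝ) ^ t := by
  intro Reach P Bv Be hex
  have hBv : ∀ a k, Bv a k = WalkAux.Bv N a k := by
    intro a k
    ext u
    simp only [Bv, Reach, WalkAux.Bv, Set.mem_setOf_eq, WalkAux.W_iff]
  have hBe : ∀ a k, Be a k = WalkAux.Be N a k := by
    intro a k
    ext u
    simp only [Be, Reach, WalkAux.Be, Set.mem_setOf_eq, WalkAux.W_iff]
  simp only [hBv, hBe] at hex ⊢
  rcases Nat.eq_zero_or_pos h with h0 | h0
  · obtain rfl : t = 0 := by omega
    rw [Finset.sum_eq_single_of_mem x (Finset.mem_univ _)]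
    · simp only [pow_zero, Set.indicator_apply, Matrix.one_apply_eq]
      split_ifs <;> norm_num
    · intro w _ hw
      simp [Set.indicator_apply, Matrix.one_apply, hw.symm]
  · exact WalkAux.main_bound N hdeg x h h0 P (fun _ _ => rfl) hex t ht
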